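/- Let n ≥ 2 be an integer, H ∈ ℝ, and R > 0 with s_H(t) > 0 on (0,R]. Let m : (0,R] → ℝ be C¹, f : [0,R] → ℝ be C², and ρ : [0,R] → [0,∞) be continuous. Assume: (i) m'(t) ≤ −m(t)²/(n−1) − (n−1)H + f''(t) + ρ(t) for all t ∈ (0,R); (ii) s_H(t)²·(m(t) − (n−1)·s_H'(t)/s_H(t)) → 0 as t → 0⁺. Then for every r ∈ (0,R], s_H(r)²·( m(r) − f'(r) ) ≤ (n−1)·s_H(r)·s_H'(r) − ∫₀ʳ f'(t)·(s_H²)'(t) dt + ∫₀ʳ s_H(t)²·ρ(t) dt. (Integrated estimate (2.4) in the proof of Theorem 1.1, obtained by integration by parts.) -/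

import Mathlib

/-!
The defect `W t = s² (m - f') - (n - 1) s s' + ∫₀ᵗ f' (s²)' - ∫₀ᵗ s² ρ` satisfies, by the Riccati
inequality and `s'' = -H s`,
`W' ≤ 2 s s' m - s² m² / (n - 1) - (n - 1) s'² = -(s m - (n - 1) s')² / (n - 1) ≤ 0`
on `(0, R)`. The term `s² f''` cancels between the Riccati inequality and the derivative of `s² f'`,
which replaces the integration by parts. So `W` is nonincreasing on `(0, R]`; since `W → 0` at `0⁺`
by the asymptotic hypothesis on `m`, it is nonpositive there.
-/

open Real MeasureTheory Set Filter

/-- The solution of `s'' + H s = 0`, `s 0 = 0`, `s' 0 = 1`. -/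
noncomputable def sH (H t : ℝ) : ℝ :=
  if 0 < H then Real.sin (Real.sqrt H * t) / Real.sqrt H
  else if H = 0 then t
  else Real.sinh (Real.sqrt (-H) * t) / Real.sqrt (-H)

/-- The derivative of `sH H`. -/
noncomputable def sH' (H t : ℝ) : ℝ :=
  if 0 < H then Real.cos (Real.sqrt H * t)
  else if H = 0 then 1
  else Real.cosh (Real.sqrt (-H) * t)

lemma sH_zero (H : ℝ) : sH H 0 = 0 := by
  simp [sH]

lemma hasDerivAt_sH (H t : ℝ) : HasDerivAt (sH H) (sH' H t) t := by
  unfold sH sH'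
  split_ifs with h1 h2
  · have hs : √H ≠ 0 := (Real.sqrt_pos.2 h1).ne'
    have := (((hasDerivAt_id t).const_mul (√H)).sin).div_const (√H)
    refine this.congr_deriv ?_
    simp [hs]
  · exact hasDerivAt_id t
  · have hs : √(-H) ≠ 0 := by
      have : 0 < -H := by
        have := lt_of_le_of_ne (not_lt.1 h1) h2
        linarith
      exact (Real.sqrt_pos.2 this).ne'
    have := (((hasDerivAt_id t).const_mul (√(-H))).sinh).div_const (√(-H))
    refine this.congr_deriv ?_
    simp [hs]

lemma hasDerivAt_sH' (H t : ℝ) : HasDerivAt (sH' H) (-H * sH H t) t := by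
  unfold sH sH'
  split_ifs with h1 h2
  · have hs : √H ≠ 0 := (Real.sqrt_pos.2 h1).ne'
    have := ((hasDerivAt_id t).const_mul (√H)).cos
    refine this.congr_deriv ?_
    have h3 : √H * √H = H := Real.mul_self_sqrt h1.le
    simp only [id, mul_one]
    field_simp
    linear_combination (-Real.sin (√H * t)) * h3
  · subst h2
    simpa using hasDerivAt_const t (1 : ℝ)
  · have hp : 0 < -H := by
      have := lt_of_le_of_ne (not_lt.1 h1) h2
      linarith
    have hs : √(-H) ≠ 0 := (Real.sqrt_pos.2 hp).ne'
    have := ((hasDerivAt_id t).const_mul (√(-H))).cosh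
    refine this.congr_deriv ?_
    have h3 : √(-H) * √(-H) = -H := Real.mul_self_sqrt hp.le
    simp only [id, mul_one]
    field_simp
    linear_combination (Real.sinh (√(-H) * t)) * h3

lemma continuous_sH (H : ℝ) : Continuous (sH H) :=
  continuous_iff_continuousAt.2 fun t => (hasDerivAt_sH H t).continuousAt

lemma continuous_sH' (H : ℝ) : Continuous (sH' H) :=
  continuous_iff_continuousAt.2 fun t => (hasDerivAt_sH' H t).continuousAt

lemma continuousOn_primitive_Icc {R : ℝ} (hR : 0 < R) {g : ℝ → ℝ}
    (hg : ContinuousOn g (Set.Icc 0 R)) :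
    ContinuousOn (fun t => ∫ x in (0:ℝ)..t, g x) (Set.Icc 0 R) := by
  have h := intervalIntegral.continuousOn_primitive_interval (μ := volume) (a := 0) (b := R)
    (f := g) (by rw [Set.uIcc_of_le hR.le]; exact hg.integrableOn_Icc)
  rwa [Set.uIcc_of_le hR.le] at h

lemma hasDerivAt_primitive_Ioo {R : ℝ} {g : ℝ → ℝ}
    (hg : ContinuousOn g (Set.Icc 0 R)) {t : ℝ} (ht : t ∈ Set.Ioo 0 R) :
    HasDerivAt (fun t => ∫ x in (0:ℝ)..t, g x) (g t) t := by
  refine intervalIntegral.integral_hasDerivAt_right ?_ ?_ ?_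
  · refine (hg.mono ?_).intervalIntegrable
    rw [Set.uIcc_of_le ht.1.le]
    exact Set.Icc_subset_Icc_right ht.2.le
  · exact (hg.mono Set.Ioo_subset_Icc_self).stronglyMeasurableAtFilter isOpen_Ioo t ht
  · exact hg.continuousAt (Icc_mem_nhds ht.1 ht.2)

/-- Integrated estimate (2.4) in the proof of Theorem 1.1, obtained by
integration by parts. -/
theorem stmt_5 (n : ℕ) (hn : 2 ≤ n) (H R : ℝ) (hR : 0 < R)
    (hsH : ∀ t ∈ Set.Ioc 0 R, 0 < sH H t)
    (m f ρ m' f' f'' : ℝ → ℝ)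
    (hmC : ContinuousOn m (Set.Ioc 0 R))
    (hm : ∀ t ∈ Set.Ioo 0 R, HasDerivAt m (m' t) t)
    (hf : ∀ t ∈ Set.Icc 0 R, HasDerivWithinAt f (f' t) (Set.Icc 0 R) t)
    (hf' : ∀ t ∈ Set.Icc 0 R, HasDerivWithinAt f' (f'' t) (Set.Icc 0 R) t)
    (hf''C : ContinuousOn f'' (Set.Icc 0 R))
    (hρC : ContinuousOn ρ (Set.Icc 0 R)) (hρ : ∀ t ∈ Set.Icc 0 R, 0 ≤ ρ t)
    (hRic : ∀ t ∈ Set.Ioo 0 R,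
      m' t ≤ -(m t) ^ 2 / (n - 1) - (n - 1) * H + f'' t + ρ t)
    (hasymp : Filter.Tendsto
      (fun t => (sH H t) ^ 2 * (m t - (n - 1) * sH' H t / sH H t))
      (nhdsWithin 0 (Set.Ioi 0)) (nhds 0)) :
    ∀ r ∈ Set.Ioc 0 R,
      (sH H r) ^ 2 * (m r - f' r)
        ≤ (n - 1) * sH H r * sH' H r
          - (∫ t in (0:ℝ)..r, f' t * (2 * sH H t * sH' H t))
          + ∫ t in (0:ℝ)..r, (sH H t) ^ 2 * ρ t := by
  have hn1 : (0 : ℝ) < n - 1 := by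
    have : (2 : ℝ) ≤ n := by exact_mod_cast hn
    linarith
  have hcs := continuous_sH H
  have hcs' := continuous_sH' H
  have hf'C : ContinuousOn f' (Set.Icc 0 R) := fun t ht => (hf' t ht).continuousWithinAt
  have hg1 : ContinuousOn (fun t => f' t * (2 * sH H t * sH' H t)) (Set.Icc 0 R) :=
    hf'C.mul (by fun_prop)
  have hg2 : ContinuousOn (fun t => (sH H t) ^ 2 * ρ t) (Set.Icc 0 R) :=
    ContinuousOn.mul (by fun_prop) hρC
  set F : ℝ → ℝ := fun r => ∫ t in (0:ℝ)..r, f' t * (2 * sH H t * sH' H t) with hF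
  set G : ℝ → ℝ := fun r => ∫ t in (0:ℝ)..r, (sH H t) ^ 2 * ρ t with hG
  have hFC : ContinuousOn F (Set.Icc 0 R) := continuousOn_primitive_Icc hR hg1
  have hGC : ContinuousOn G (Set.Icc 0 R) := continuousOn_primitive_Icc hR hg2
  let W : ℝ → ℝ := fun t =>
    (sH H t) ^ 2 * (m t - f' t) - (n - 1) * (sH H t * sH' H t) + F t - G t
  have hsub : Set.Ioc 0 R ⊆ Set.Icc 0 R := Set.Ioc_subset_Icc_self
  have hWC : ContinuousOn W (Set.Ioc 0 R) := by
    have h1 : ContinuousOn (fun t => (sH H t) ^ 2 * (m t - f' t)) (Set.Ioc 0 R) :=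
      ContinuousOn.mul (by fun_prop) (hmC.sub (hf'C.mono hsub))
    have h2 : ContinuousOn (fun t => ((n : ℝ) - 1) * (sH H t * sH' H t)) (Set.Ioc 0 R) := by
      fun_prop
    exact ((h1.sub h2).add (hFC.mono hsub)).sub (hGC.mono hsub)
  have hWanti : AntitoneOn W (Set.Ioc 0 R) := by
    have hder : ∀ t ∈ Set.Ioo 0 R, HasDerivAt W
        (2 * sH H t * sH' H t * (m t - f' t) + (sH H t) ^ 2 * (m' t - f'' t)
          - (n - 1) * (sH' H t * sH' H t + sH H t * (-H * sH H t))
          + f' t * (2 * sH H t * sH' H t) - (sH H t) ^ 2 * ρ t) t := by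
      intro t ht
      have hd := (hf' t (Set.Ioo_subset_Icc_self ht)).hasDerivAt (Icc_mem_nhds ht.1 ht.2)
      have h1 := ((hasDerivAt_sH H t).pow 2).mul ((hm t ht).sub hd)
      have h2 := ((hasDerivAt_sH H t).mul (hasDerivAt_sH' H t)).const_mul ((n : ℝ) - 1)
      have h3 : HasDerivAt F _ t := hasDerivAt_primitive_Ioo hg1 ht
      have h4 : HasDerivAt G _ t := hasDerivAt_primitive_Ioo hg2 ht
      refine (((h1.sub h2).add h3).sub h4).congr_deriv ?_
      simp
    refine antitoneOn_of_deriv_nonpos (convex_Ioc 0 R) hWC ?_ ?_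
    · rw [interior_Ioc]
      exact fun t ht => (hder t ht).differentiableAt.differentiableWithinAt
    · rw [interior_Ioc]
      intro t ht
      rw [(hder t ht).deriv]
      have h1 := mul_le_mul_of_nonneg_left (hRic t ht) (sq_nonneg (sH H t))
      have h2 : 0 ≤ (sH H t * m t - (n - 1) * sH' H t) ^ 2 / (n - 1) := by positivity
      have h3 : (sH H t * m t - (n - 1) * sH' H t) ^ 2 / (n - 1)
          = (sH H t) ^ 2 * ((m t) ^ 2 / (n - 1)) - 2 * sH H t * sH' H t * m t
            + (n - 1) * (sH' H t) ^ 2 := by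
        field_simp
        ring
      rw [neg_div] at h1
      nlinarith
  have hWlim : Tendsto W (nhdsWithin 0 (Set.Ioi 0)) (nhds 0) := by
    have hk : ContinuousOn (fun t => -((sH H t) ^ 2 * f' t) + F t - G t) (Set.Icc 0 R) := by
      have h1 : ContinuousOn (fun t => -((sH H t) ^ 2 * f' t)) (Set.Icc 0 R) :=
        (ContinuousOn.mul (by fun_prop) hf'C).neg
      exact (h1.add hFC).sub hGC
    have hk0 := (hk 0 ⟨le_rfl, hR.le⟩).tendsto.mono_left
      ((nhdsWithin_Ioc_eq_nhdsGT hR).symm.le.trans (nhdsWithin_mono 0 hsub))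
    have hsum := hasymp.add hk0
    simp only [sH_zero, hF, hG, intervalIntegral.integral_same] at hsum
    have h0 : (0 : ℝ) + (-(0 ^ 2 * f' 0) + 0 - 0) = 0 := by ring
    rw [h0] at hsum
    refine hsum.congr' ?_
    filter_upwards [Ioc_mem_nhdsGT hR] with t ht
    have hs := (hsH t ht).ne'
    simp only [W, hF, hG]
    field_simp
    ring_nf
  intro r hr
  have hWr : W r ≤ 0 := by
    refine ge_of_tendsto hWlim ?_
    filter_upwards [Ioc_mem_nhdsGT hr.1] with t ht
    exact hWanti ⟨ht.1, ht.2.trans hr.2⟩ hr ht.2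
  change _ ≤ _ - F r + G r
  simp only [W] at hWr
  linarith
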